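/- There is no invertible element R ∈ Q⊗Q such that R·Δ(a) = Δ^op(a)·R for all a ∈ Q and both hexagon identities (Δ⊗id)(R) = R₁₃·R₂₃ and (id⊗Δ)(R) = R₁₃·R₁₂ hold. In other words, the Hopf algebra Q = \bar U_i sl(2) admits no universal R-matrix, so its representation category is not braidable. -/

import Mathlib

open TensorProduct

set_option maxHeartbeats 1000000
set_option synthInstance.maxHeartbeats 400000

noncomputable section

/-- Generators of the restricted quantum group `Q = \bar U_i sl(2)`. -/
inductive QGen : Type
  | E | F | K | Kinv
deriving DecidableEq

/-- The free algebra on the generators. -/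
abbrev FA : Type := FreeAlgebra ℂ QGen

def ιE : FA := FreeAlgebra.ι ℂ QGen.E
def ιF : FA := FreeAlgebra.ι ℂ QGen.F
def ιK : FA := FreeAlgebra.ι ℂ QGen.K
def ιKi : FA := FreeAlgebra.ι ℂ QGen.Kinv

/-- Defining relations of `\bar U_i sl(2)` (at `q = i`, i.e. `p = 2`). -/
inductive QRel : FA → FA → Prop
  | KKi : QRel (ιK * ιKi) 1
  | KiK : QRel (ιKi * ιK) 1
  | KEKi : QRel (ιK * ιE * ιKi) (-ιE)
  | KFKi : QRel (ιK * ιF * ιKi) (-ιF)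
  | EF : QRel (ιE * ιF - ιF * ιE) ((2 * Complex.I)⁻¹ • (ιK - ιKi))
  | Esq : QRel (ιE ^ 2) 0
  | Fsq : QRel (ιF ^ 2) 0
  | K4 : QRel (ιK ^ 4) 1

/-- The restricted quantum group `\bar U_i sl(2)`: the quotient of the free algebra
by the two-sided ideal generated by the defining relations. -/
abbrev Q : Type := RingQuot QRel

def gE : Q := RingQuot.mkAlgHom ℂ QRel ιE
def gF : Q := RingQuot.mkAlgHom ℂ QRel ιF
def gK : Q := RingQuot.mkAlgHom ℂ QRel ιK
def gKi : Q := RingQuot.mkAlgHom ℂ QRel ιKi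

section Gadgets

variable (k : Type) [Field k] (A : Type) [Ring A] [Algebra k A]

abbrev TP2 : Type := A ⊗[k] A
abbrev TP3 : Type := A ⊗[k] (A ⊗[k] A)
abbrev TP4 : Type := A ⊗[k] (A ⊗[k] (A ⊗[k] A))

/-- Multiplication `a ⊗ b ↦ a * b`. -/
def mulA : TP2 k A →ₗ[k] A := LinearMap.mul' k A

/-- Tensor flip `a ⊗ b ↦ b ⊗ a`. -/
def flipA : TP2 k A →ₗ[k] TP2 k A := (TensorProduct.comm k A A).toLinearMap

/-- `a ↦ a ⊗ 1`. -/
def lTen : A →ₗ[k] TP2 k A := (TensorProduct.mk k A A).flip 1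

/-- `a ↦ 1 ⊗ a`. -/
def rTen : A →ₗ[k] TP2 k A := TensorProduct.mk k A A 1

/-- `a ⊗ b ↦ a ⊗ b ⊗ 1`. -/
def emb12 : TP2 k A →ₗ[k] TP3 k A := TensorProduct.map LinearMap.id (lTen k A)

/-- `a ⊗ b ↦ a ⊗ 1 ⊗ b`. -/
def emb13 : TP2 k A →ₗ[k] TP3 k A := TensorProduct.map LinearMap.id (rTen k A)

/-- `a ⊗ b ↦ 1 ⊗ a ⊗ b`. -/
def emb23 : TP2 k A →ₗ[k] TP3 k A := TensorProduct.mk k A (TP2 k A) 1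

/-- `a ⊗ b ⊗ c ↦ a ⊗ c ⊗ b`. -/
def perm132 : TP3 k A →ₗ[k] TP3 k A := TensorProduct.map LinearMap.id (flipA k A)

/-- `a ⊗ b ⊗ c ↦ b ⊗ c ⊗ a`. -/
def perm231 : TP3 k A →ₗ[k] TP3 k A :=
  (TensorProduct.assoc k A A A).toLinearMap ∘ₗ (TensorProduct.comm k A (TP2 k A)).toLinearMap

/-- `a ⊗ b ⊗ c ↦ c ⊗ a ⊗ b`. -/
def perm312 : TP3 k A →ₗ[k] TP3 k A :=
  (TensorProduct.comm k (TP2 k A) A).toLinearMap ∘ₗ (TensorProduct.assoc k A A A).symm.toLinearMap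

/-- `a ⊗ b ⊗ c ↦ b ⊗ a ⊗ c`. -/
def perm213 : TP3 k A →ₗ[k] TP3 k A :=
  (TensorProduct.assoc k A A A).toLinearMap ∘ₗ
    (TensorProduct.map (flipA k A) LinearMap.id) ∘ₗ (TensorProduct.assoc k A A A).symm.toLinearMap

variable {k A}

/-- `(Δ ⊗ id)` on two tensor factors, landing in the triple tensor product. -/
def copL (D : A →ₐ[k] TP2 k A) : TP2 k A →ₗ[k] TP3 k A :=
  (TensorProduct.assoc k A A A).toLinearMap ∘ₗ TensorProduct.map D.toLinearMap LinearMap.id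

/-- `(id ⊗ Δ)` on two tensor factors. -/
def copR (D : A →ₐ[k] TP2 k A) : TP2 k A →ₗ[k] TP3 k A :=
  TensorProduct.map LinearMap.id D.toLinearMap

/-- `(ε ⊗ id) : A ⊗ A → A`. -/
def cuL (ce : A →ₐ[k] k) : TP2 k A →ₗ[k] A :=
  (TensorProduct.lid k A).toLinearMap ∘ₗ TensorProduct.map ce.toLinearMap LinearMap.id

/-- `(id ⊗ ε) : A ⊗ A → A`. -/
def cuR (ce : A →ₐ[k] k) : TP2 k A →ₗ[k] A :=
  (TensorProduct.rid k A).toLinearMap ∘ₗ TensorProduct.map LinearMap.id ce.toLinearMap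

/-- `(id ⊗ ε ⊗ id) : A ⊗ A ⊗ A → A ⊗ A`. -/
def cuMid (ce : A →ₐ[k] k) : TP3 k A →ₗ[k] TP2 k A :=
  TensorProduct.map LinearMap.id (cuL ce)

/-- `(Δ ⊗ id ⊗ id)`. -/
def cop4_1 (D : A →ₐ[k] TP2 k A) : TP3 k A →ₗ[k] TP4 k A :=
  (TensorProduct.assoc k A A (TP2 k A)).toLinearMap ∘ₗ TensorProduct.map D.toLinearMap LinearMap.id

/-- `(id ⊗ Δ ⊗ id)`. -/
def cop4_2 (D : A →ₐ[k] TP2 k A) : TP3 k A →ₗ[k] TP4 k A :=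
  TensorProduct.map LinearMap.id (copL D)

/-- `(id ⊗ id ⊗ Δ)`. -/
def cop4_3 (D : A →ₐ[k] TP2 k A) : TP3 k A →ₗ[k] TP4 k A :=
  TensorProduct.map LinearMap.id (copR D)

/-- `a ⊗ b ⊗ c ↦ a ⊗ b ⊗ c ⊗ 1`, i.e. `Φ ↦ Φ ⊗ 1`. -/
def pad4 : TP3 k A →ₗ[k] TP4 k A :=
  TensorProduct.map LinearMap.id (TensorProduct.map LinearMap.id (lTen k A))

/-- `a ⊗ b ⊗ c ↦ f(a) * g(b) * h(c)`. -/
def tmap3 (f g h : A →ₗ[k] A) : TP3 k A →ₗ[k] A :=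
  mulA k A ∘ₗ TensorProduct.map f (mulA k A ∘ₗ TensorProduct.map g h)

/-- `a ⊗ b ↦ S(a) * b`, used in the antipode axiom `m ∘ (S ⊗ id) ∘ Δ = 1·ε`. -/
def antipL (s : A →ₗ[k] A) : TP2 k A →ₗ[k] A := mulA k A ∘ₗ TensorProduct.map s LinearMap.id

/-- `a ⊗ b ↦ a * S(b)`. -/
def antipR (s : A →ₗ[k] A) : TP2 k A →ₗ[k] A := mulA k A ∘ₗ TensorProduct.map LinearMap.id s

end Gadgets

/-- Central idempotent `e₀ = (1 + K²)/2`. -/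
def e0 : Q := (2:ℂ)⁻¹ • (1 + gK ^ 2)

/-- Central idempotent `e₁ = (1 − K²)/2`. -/
def e1 : Q := (2:ℂ)⁻¹ • (1 - gK ^ 2)

/-- `f⁺ = −i F`. -/
def fp : Q := (-Complex.I) • gF

/-- `f⁻ = E K⁻¹`. -/
def fm : Q := gE * gKi

/-- The Casimir element `C = FE − (i/4)(K − K⁻¹)`. -/
def Cas : Q := gF * gE - (Complex.I / 4) • (gK - gKi)

def t2 (a b : Q) : TP2 ℂ Q := a ⊗ₜ[ℂ] b

def t3 (a b c : Q) : TP3 ℂ Q := a ⊗ₜ[ℂ] (b ⊗ₜ[ℂ] c)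

def eEF : Q := gE * gF
def eEK : Q := gE * gK
def eFK : Q := gF * gK
def eEFK : Q := gE * gF * gK

/-- `Φ^{010}` component of the coassociator. -/
def Phi010 : TP3 ℂ Q :=
  t3 1 1 1 - (1 + Complex.I) • t3 gE gK gF + (1 - Complex.I) • t3 eFK gK eEK
    + (2:ℂ) • t3 eEFK 1 eEFK

/-- `Φ^{101}` component of the coassociator. -/
def Phi101 : TP3 ℂ Q :=
  (Complex.I - 1) • t3 1 gF eEK + t3 1 gK 1 + (2:ℂ) • t3 1 eEF eEFK
    - (1 + Complex.I) • t3 1 eEK gF - (1 + Complex.I) • t3 gE eFK 1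
    + (2 * Complex.I) • t3 gE eEFK gF + (1 - Complex.I) • t3 eFK gE 1
    - (2 * Complex.I) • t3 eFK eEFK eEK - (2:ℂ) • t3 eEFK eEF 1

/-- `Φ^{111}` component of the coassociator. -/
def Phi111 (β : ℂ) : TP3 ℂ Q :=
  (Complex.I * β ^ 2) • (
    (1 + Complex.I) • t3 1 gF eEK - t3 1 gK 1 - (2:ℂ) • t3 1 eEF 1
      - (2 * Complex.I) • t3 1 eEF eEFK + (1 + Complex.I) • t3 1 eEK gF
      - (1 + Complex.I) • t3 gE 1 gF + (1 + Complex.I) • t3 gE eFK 1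
      + (2 * Complex.I) • t3 gE eFK eEFK + (2:ℂ) • t3 gE eEFK gF
      - (1 + Complex.I) • t3 eFK 1 eEK + (1 + Complex.I) • t3 eFK gE 1
      + (2 * Complex.I) • t3 eFK gE eEFK + (2:ℂ) • t3 eFK eEFK eEK
      + (2 * Complex.I) • t3 eEFK gF eEK + (2 * Complex.I) • t3 eEFK gK eEFK
      - (2 * Complex.I) • t3 eEFK eEF 1 + (2 * Complex.I) • t3 eEFK eEK gF
      + (4:ℂ) • t3 eEFK eEF eEFK)

/-- The coassociator `Φ` of the quasi-Hopf algebra structure on `Q`. -/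
def Phi (β : ℂ) : TP3 ℂ Q :=
  t3 e0 e0 e0 + t3 e1 e0 e0 + Phi010 * t3 e0 e1 e0 + t3 e0 e0 e1
    + t3 e1 e1 e0 + Phi101 * t3 e1 e0 e1 + t3 e0 e1 e1 + Phi111 β * t3 e1 e1 e1

def R00 : TP2 ℂ Q :=
  (2:ℂ)⁻¹ • ((t2 1 1 + t2 1 gK + t2 gK 1 - t2 gK gK) * (t2 1 1 + (2 * Complex.I) • t2 gE gF))

def R01 : TP2 ℂ Q :=
  (2:ℂ)⁻¹ • ((t2 1 1 - Complex.I • t2 1 gK + t2 gK 1 + Complex.I • t2 gK gK) *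
    (t2 1 1 + (1 - Complex.I) • t2 eFK eEK - (1 - Complex.I) • t2 gE gF
      + (1 + Complex.I) • t2 eEFK 1 + (2 * Complex.I) • t2 eEFK eEFK))

def R10 : TP2 ℂ Q :=
  (2:ℂ)⁻¹ • ((t2 1 1 + t2 1 gK - Complex.I • t2 gK 1 + Complex.I • t2 gK gK) *
    (t2 1 gK + (1 - Complex.I) • t2 eFK gE + (1 - Complex.I) • t2 gE eFK
      - (1 - Complex.I) • t2 1 eEF - (2 * Complex.I) • t2 eEFK eEF))

def R11 (β : ℂ) : TP2 ℂ Q :=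
  (β / 2) • ((t2 1 1 - Complex.I • t2 1 gK - Complex.I • t2 gK 1 + t2 gK gK) *
    ((-Complex.I) • t2 gK 1 + (2 * Complex.I) • t2 eEK gF + (1 - Complex.I) • t2 gK eEFK
      - (1 + Complex.I) • t2 eEF 1 - (2 * Complex.I) • t2 eEF eEFK))

/-- The universal R-matrix `R` of the quasi-triangular quasi-Hopf structure on `Q`. -/
def Rmat (β : ℂ) : TP2 ℂ Q :=
  R00 * t2 e0 e0 + R01 * t2 e0 e1 + R10 * t2 e1 e0 + R11 β * t2 e1 e1

/-- The standard R-matrix `R_st` of the quotient `Q/(K²-1)`. -/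
def Rst : TP2 ℂ Q :=
  (2:ℂ)⁻¹ • ∑ m ∈ Finset.range 2, ∑ n ∈ Finset.range 2,
    ((-1:ℂ) ^ (m * n)) • (t2 (gK ^ m) (gK ^ n) * (t2 1 1 + (2 * Complex.I) • t2 gE gF))

/-- The monodromy matrix `M = R₂₁ · R`. -/
def Mmat (β : ℂ) : TP2 ℂ Q := flipA ℂ Q (Rmat β) * Rmat β

/-- The ribbon element `v = (e₀ − iβ K e₁)(1 − 2 f⁺ f⁻)`. -/
def vRib (β : ℂ) : Q := (e0 - (Complex.I * β) • (gK * e1)) * (1 - (2:ℂ) • (fp * fm))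

/-- The coevaluation element `β = e₀ − 2iβ² C e₁`. -/
def bbEl (β : ℂ) : Q := e0 - (2 * Complex.I * β ^ 2) • (Cas * e1)

/-- `b ⊗ c ↦ S(b · bb · S(c))`, inner part of the Drinfeld element. -/
def uInner (S : Q →ₗ[ℂ] Q) (bb : Q) : TP2 ℂ Q →ₗ[ℂ] Q :=
  S ∘ₗ mulA ℂ Q ∘ₗ TensorProduct.map (LinearMap.mulRight ℂ bb) S

/-- `Φ' ⊗ Φ'' ⊗ Φ''' ↦ S(Φ'' · bb · S(Φ''')) ⊗ Φ'`. -/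
def uMap1 (S : Q →ₗ[ℂ] Q) (bb : Q) : TP3 ℂ Q →ₗ[ℂ] TP2 ℂ Q :=
  TensorProduct.map (uInner S bb) LinearMap.id ∘ₗ (TensorProduct.comm ℂ Q (TP2 ℂ Q)).toLinearMap

/-- `R' ⊗ R'' ↦ S(R'') · al · R'`. -/
def uMap2 (S : Q →ₗ[ℂ] Q) (al : Q) : TP2 ℂ Q →ₗ[ℂ] Q :=
  mulA ℂ Q ∘ₗ TensorProduct.map (LinearMap.mulRight ℂ al ∘ₗ S) LinearMap.id ∘ₗ
    (TensorProduct.comm ℂ Q Q).toLinearMap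

/-- `(x ⊗ a) ⊗ (R' ⊗ R'') ↦ x · (S(R'') · al · R') · a`. -/
def uBig (S : Q →ₗ[ℂ] Q) (al : Q) : TP2 ℂ Q ⊗[ℂ] TP2 ℂ Q →ₗ[ℂ] Q :=
  mulA ℂ Q ∘ₗ TensorProduct.map LinearMap.id (mulA ℂ Q ∘ₗ (TensorProduct.comm ℂ Q Q).toLinearMap)
    ∘ₗ (TensorProduct.assoc ℂ Q Q Q).toLinearMap ∘ₗ TensorProduct.map LinearMap.id (uMap2 S al)

/-- The Drinfeld element `u = Σ S(Φ''·b·S(Φ'''))·S(R'')·α·R'·Φ'` (with `α = 1`). -/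
def uDrin (β : ℂ) (S : Q →ₗ[ℂ] Q) : Q :=
  uBig S 1 (uMap1 S (bbEl β) (Phi β) ⊗ₜ[ℂ] Rmat β)

/-- The balancing element `g = b · S(α) · v⁻¹ · u` (with `α = 1`). -/
def balG (β : ℂ) (S : Q →ₗ[ℂ] Q) : Q :=
  bbEl β * S 1 * Ring.inverse (vRib β) * uDrin β S

/-- The cointegral `c = (β²/i)·E·F·(1 + K + K² + K³)`. -/
def cInt (β : ℂ) : Q := (β ^ 2 / Complex.I) • (gE * gF * (1 + gK + gK ^ 2 + gK ^ 3))

/-- The q-trace of a one-dimensional representation, with balancing element `K⁻¹`. -/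
def qTr1 (ρ : Q →ₐ[ℂ] ℂ) : Q →ₗ[ℂ] ℂ := ρ.toLinearMap ∘ₗ LinearMap.mulLeft ℂ gK

/-- The q-trace of a two-dimensional (matrix) representation, with balancing element `K⁻¹`. -/
def qTrM (ρ : Q →ₐ[ℂ] Matrix (Fin 2) (Fin 2) ℂ) : Q →ₗ[ℂ] ℂ :=
  Matrix.traceLinearMap (Fin 2) ℂ ℂ ∘ₗ ρ.toLinearMap ∘ₗ LinearMap.mulLeft ℂ gK

/-- The Drinfeld mapping `φ ↦ (φ ⊗ id)(M)`. -/
def drinfeldImg (β : ℂ) (φ : Q →ₗ[ℂ] ℂ) : Q :=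
  (TensorProduct.lid ℂ Q) (TensorProduct.map φ LinearMap.id (Mmat β))

/-!
Evaluating the first leg of a universal R-matrix `R` at a character `χ` of `Q` gives an element
`g = (χ ⊗ id) R`. The hexagon for `Δ ⊗ id` makes `χ ↦ g` multiplicative for the convolution of
characters, the hexagon for `id ⊗ Δ` makes `g` group-like, and intertwining makes `g` twist the
generators. Take the sign character `χ(K) = -1`. Its convolution square is the counit, so `g² = 1`,
while `g` commutes with `K` and anticommutes with `E`. In the two-dimensional irreducible
representation such a `g` acts as `diag(a, -a)` with `a² = 1`. But the tensor square of this
representation contains an invariant vector, on which the group-like `g` acts both by `1` and by the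
determinant `-a²`.
-/

section Slices

variable {k A : Type} [Field k] [Ring A] [Algebra k A]

/-- The slice map `χ ⊗ id : A ⊗ B → B`, which evaluates the first tensor leg at a character `χ`. -/
def sliceLeft {B : Type*} [Ring B] [Algebra k B] (χ : A →ₐ[k] k) : A ⊗[k] B →ₐ[k] B :=
  (Algebra.TensorProduct.lid k B).toAlgHom.comp (Algebra.TensorProduct.map χ (AlgHom.id k B))

@[simp]
lemma sliceLeft_tmul {B : Type*} [Ring B] [Algebra k B] (χ : A →ₐ[k] k) (a : A) (b : B) :
    sliceLeft χ (a ⊗ₜ[k] b) = χ a • b := by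
  simp [sliceLeft]

/-- The convolution product `(φ ⊗ ψ) ∘ Δ` of two characters along `Δ`. -/
def convChar (Δ : A →ₐ[k] TP2 k A) (φ ψ : A →ₐ[k] k) : A →ₐ[k] k :=
  ψ.comp ((sliceLeft φ).comp Δ)

lemma convChar_apply (Δ : A →ₐ[k] TP2 k A) (φ ψ : A →ₐ[k] k) (a : A) :
    convChar Δ φ ψ a = ψ (sliceLeft φ (Δ a)) := rfl

lemma sliceLeft_emb12 (χ : A →ₐ[k] k) (X : TP2 k A) :
    sliceLeft χ (emb12 k A X) = sliceLeft χ X ⊗ₜ[k] 1 := by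
  induction X using TensorProduct.induction_on with
  | zero => simp
  | tmul a b => simp [emb12, lTen, smul_tmul']
  | add X Y hX hY => simp only [map_add, hX, hY, add_tmul]

lemma sliceLeft_emb13 (χ : A →ₐ[k] k) (X : TP2 k A) :
    sliceLeft χ (emb13 k A X) = 1 ⊗ₜ[k] sliceLeft χ X := by
  induction X using TensorProduct.induction_on with
  | zero => simp
  | tmul a b => simp [emb13, rTen]
  | add X Y hX hY => simp only [map_add, hX, hY, tmul_add]

lemma sliceLeft_emb23 (χ : A →ₐ[k] k) (X : TP2 k A) : sliceLeft χ (emb23 k A X) = X := by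
  simp [emb23]

lemma sliceLeft_copR (Δ : A →ₐ[k] TP2 k A) (χ : A →ₐ[k] k) (X : TP2 k A) :
    sliceLeft χ (copR Δ X) = Δ (sliceLeft χ X) := by
  induction X using TensorProduct.induction_on with
  | zero => simp
  | tmul a b => simp [copR]
  | add X Y hX hY => simp only [map_add, hX, hY]

lemma sliceLeft_sliceLeft_assoc (φ ψ : A →ₐ[k] k) (X : TP2 k A) (a : A) :
    sliceLeft ψ (sliceLeft φ (TensorProduct.assoc k A A A (X ⊗ₜ[k] a))) =
      ψ (sliceLeft φ X) • a := by
  induction X using TensorProduct.induction_on with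
  | zero => simp
  | tmul b c => simp [mul_smul]
  | add X Y hX hY => simp only [map_add, add_tmul, hX, hY, add_smul]

lemma sliceLeft_sliceLeft_copL (Δ : A →ₐ[k] TP2 k A) (φ ψ : A →ₐ[k] k) (X : TP2 k A) :
    sliceLeft ψ (sliceLeft φ (copL Δ X)) = sliceLeft (convChar Δ φ ψ) X := by
  induction X using TensorProduct.induction_on with
  | zero => simp
  | tmul a b => simp [copL, sliceLeft_sliceLeft_assoc, convChar_apply]
  | add X Y hX hY => simp only [map_add, hX, hY]

lemma sliceLeft_convChar_of_copL_eq {Δ : A →ₐ[k] TP2 k A} {R : TP2 k A}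
    (hR : copL Δ R = emb13 k A R * emb23 k A R) (φ ψ : A →ₐ[k] k) :
    sliceLeft (convChar Δ φ ψ) R = sliceLeft φ R * sliceLeft ψ R := by
  rw [← sliceLeft_sliceLeft_copL, hR, map_mul, map_mul, sliceLeft_emb13, sliceLeft_emb23,
    sliceLeft_tmul, map_one, one_smul]

lemma sliceLeft_eq_one_of_convChar_self {Δ : A →ₐ[k] TP2 k A} {R : TP2 k A} (hu : IsUnit R)
    (hR : copL Δ R = emb13 k A R * emb23 k A R) {φ : A →ₐ[k] k} (hφ : convChar Δ φ φ = φ) :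
    sliceLeft φ R = 1 := by
  have hidem : IsIdempotentElem (sliceLeft φ R : A) := by
    rw [IsIdempotentElem, ← sliceLeft_convChar_of_copL_eq hR, hφ]
  exact (IsIdempotentElem.iff_eq_one_of_isUnit (hu.map (sliceLeft φ))).1 hidem

lemma map_sliceLeft_of_copR_eq {Δ : A →ₐ[k] TP2 k A} {R : TP2 k A}
    (hR : copR Δ R = emb13 k A R * emb12 k A R) (χ : A →ₐ[k] k) :
    Δ (sliceLeft χ R) = sliceLeft χ R ⊗ₜ[k] sliceLeft χ R := by
  rw [← sliceLeft_copR, hR, map_mul, sliceLeft_emb13, sliceLeft_emb12,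
    Algebra.TensorProduct.tmul_mul_tmul, one_mul, mul_one]

lemma apply_eq_one_of_groupLike {Δ : A →ₐ[k] TP2 k A} {φ : A →ₐ[k] k} (hφ : convChar Δ φ φ = φ)
    {g : A} (hg : Δ g = g ⊗ₜ[k] g) (hu : IsUnit g) : φ g = 1 := by
  have hidem : IsIdempotentElem (φ g) := by
    simpa only [IsIdempotentElem, convChar_apply, hg, sliceLeft_tmul, map_smul, smul_eq_mul] using
      DFunLike.congr_fun hφ g
  exact (IsIdempotentElem.iff_eq_one_of_isUnit (hu.map φ)).1 hidem

lemma commute_sliceLeft_of_groupLike {Δ : A →ₐ[k] TP2 k A} {φ : A →ₐ[k] k} {R : TP2 k A} {x : A}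
    (hx : Δ x = x ⊗ₜ[k] x) (hφ : φ x ≠ 0) (hR : R * Δ x = flipA k A (Δ x) * R) :
    Commute (sliceLeft φ R) x := by
  have h : φ x • (sliceLeft φ R * x) = φ x • (x * sliceLeft φ R) := by
    simpa [hx, flipA] using congrArg (sliceLeft φ) hR
  exact smul_right_injective A hφ h

lemma sliceLeft_mul_eq_neg_of_skewPrimitive {Δ : A →ₐ[k] TP2 k A} {φ : A →ₐ[k] k} {R : TP2 k A}
    {x y : A} (hx : Δ x = 1 ⊗ₜ[k] x + x ⊗ₜ[k] y) (hφx : φ x = 0) (hφy : φ y = -1)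
    (hR : R * Δ x = flipA k A (Δ x) * R) :
    sliceLeft φ R * x = -(x * sliceLeft φ R) := by
  simpa [hx, hφx, hφy, flipA] using congrArg (sliceLeft φ) hR

end Slices

section MatrixAction

variable {k A : Type} {n : Type*} [Field k] [Ring A] [Algebra k A] [Fintype n] [DecidableEq n]

/-- The action of `A ⊗ A` on the tensor square of a matrix representation `ρ`, whose vectors are
encoded as square matrices: `a ⊗ b` sends `X` to `ρ(a) X ρ(b)ᵀ`. -/
def tensorSquareAction (ρ : A →ₐ[k] Matrix n n k) : TP2 k A →ₐ[k] Module.End k (Matrix n n k) :=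
  (AlgHom.mulLeftRight k (Matrix n n k)).comp
    (Algebra.TensorProduct.map ρ ((Matrix.transposeAlgEquiv n k k).toAlgHom.comp ρ))

@[simp]
lemma tensorSquareAction_tmul (ρ : A →ₐ[k] Matrix n n k) (a b : A) (X : Matrix n n k) :
    tensorSquareAction ρ (a ⊗ₜ[k] b) X = ρ a * X * (ρ b).transpose := by
  simp [tensorSquareAction]

end MatrixAction

/-- The elements of `A` that act on the vector `v` through the character `χ`. -/
def characterSubalgebra {k A V : Type*} [CommRing k] [Ring A] [Algebra k A] [AddCommGroup V]
    [Module k V] (π : A →ₐ[k] Module.End k V) (χ : A →ₐ[k] k) (v : V) : Subalgebra k A where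
  carrier := {a | π a v = χ a • v}
  mul_mem' {a b} (ha : π a v = χ a • v) (hb : π b v = χ b • v) := by
    simp [ha, hb, smul_smul, mul_comm]
  add_mem' {a b} (ha : π a v = χ a • v) (hb : π b v = χ b • v) := by
    simp [ha, hb, add_smul]
  algebraMap_mem' r := by simp

lemma transpose_fin_two_of {α : Type*} (a b c d : α) :
    (!![a, b; c, d]).transpose = !![a, c; b, d] :=
  Matrix.eta_fin_two _

namespace Q

lemma gK_mul_gKi : gK * gKi = 1 := by
  simpa [gK, gKi] using RingQuot.mkAlgHom_rel ℂ QRel.KKi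

lemma gK_pow_four : gK ^ 4 = 1 := by
  simpa [gK] using RingQuot.mkAlgHom_rel ℂ QRel.K4

lemma gKi_eq_gK_pow_three : gKi = gK ^ 3 :=
  calc gKi = gK ^ 4 * gKi := by rw [gK_pow_four, one_mul]
    _ = gK ^ 3 * (gK * gKi) := by rw [pow_succ, mul_assoc]
    _ = gK ^ 3 := by rw [gK_mul_gKi, mul_one]

lemma adjoin_gE_gF_gK : Algebra.adjoin ℂ {gE, gF, gK} = (⊤ : Subalgebra ℂ Q) := by
  rw [eq_top_iff, ← (AlgHom.range_eq_top _).2 (RingQuot.mkAlgHom_surjective ℂ QRel),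
    ← Algebra.map_top, ← FreeAlgebra.adjoin_range_ι, AlgHom.map_adjoin, Algebra.adjoin_le_iff]
  have hK : gK ∈ Algebra.adjoin ℂ {gE, gF, gK} := Algebra.subset_adjoin (by simp)
  rintro _ ⟨_, ⟨x, rfl⟩, rfl⟩
  cases x with
  | E => exact Algebra.subset_adjoin (Or.inl rfl)
  | F => exact Algebra.subset_adjoin (Or.inr (Or.inl rfl))
  | K => exact hK
  | Kinv =>
    change gKi ∈ Algebra.adjoin ℂ {gE, gF, gK}
    exact gKi_eq_gK_pow_three ▸ pow_mem hK 3

lemma algHom_ext {B : Type*} [Ring B] [Algebra ℂ B] {φ ψ : Q →ₐ[ℂ] B} (hE : φ gE = ψ gE)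
    (hF : φ gF = ψ gF) (hK : φ gK = ψ gK) : φ = ψ :=
  AlgHom.ext_of_adjoin_eq_top adjoin_gE_gF_gK (by rintro _ (rfl | rfl | rfl) <;> assumption)

section Lift

variable {B : Type*} [Ring B] [Algebra ℂ B] (x : QGen → B)
  (hx : ∀ ⦃a b⦄, QRel a b → FreeAlgebra.lift ℂ x a = FreeAlgebra.lift ℂ x b)

/-- The universal property of `Q`: images of the generators satisfying the defining relations
extend to an algebra homomorphism. -/
def lift : Q →ₐ[ℂ] B := RingQuot.liftAlgHom ℂ ⟨FreeAlgebra.lift ℂ x, hx⟩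

@[simp] lemma lift_gE : lift x hx gE = x .E := by simp [lift, gE, ιE]

@[simp] lemma lift_gF : lift x hx gF = x .F := by simp [lift, gF, ιF]

@[simp] lemma lift_gK : lift x hx gK = x .K := by simp [lift, gK, ιK]

@[simp] lemma lift_gKi : lift x hx gKi = x .Kinv := by simp [lift, gKi, ιKi]

end Lift

/-- The one-dimensional representation of `Q` with `E, F ↦ 0` and `K ↦ s`, where `s = ±1`. The
choice `s = 1` is the counit. -/
def signCharacter (s : ℤˣ) : Q →ₐ[ℂ] ℂ :=
  lift (fun | .E => 0 | .F => 0 | .K => s | .Kinv => s) <| by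
    obtain rfl | rfl := Int.units_eq_one_or s <;> rintro _ _ (_ | _) <;>
      norm_num [ιE, ιF, ιK, ιKi]

@[simp] lemma signCharacter_gE (s : ℤˣ) : signCharacter s gE = 0 := by simp [signCharacter]

@[simp] lemma signCharacter_gF (s : ℤˣ) : signCharacter s gF = 0 := by simp [signCharacter]

@[simp] lemma signCharacter_gK (s : ℤˣ) : signCharacter s gK = s := by simp [signCharacter]

/-- The two-dimensional irreducible representation of `Q`. -/
def fundamentalRep : Q →ₐ[ℂ] Matrix (Fin 2) (Fin 2) ℂ :=
  lift
    (fun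
      | .E => !![0, 1; 0, 0]
      | .F => !![0, 0; 1, 0]
      | .K => !![Complex.I, 0; 0, -Complex.I]
      | .Kinv => !![-Complex.I, 0; 0, Complex.I]) <| by
    have hI : (2 * Complex.I)⁻¹ * (Complex.I - -Complex.I) = 1 := by
      rw [sub_neg_eq_add, ← two_mul, inv_mul_cancel₀ (by simp)]
    have hI' : (2 * Complex.I)⁻¹ * (-Complex.I - Complex.I) = -1 := by
      rw [← hI]; ring
    rintro _ _ (_ | _) <;> ext i j <;> fin_cases i <;> fin_cases j <;>
      simp [-mul_inv_rev, -sub_neg_eq_add, hI, hI', ιE, ιF, ιK, ιKi, pow_succ]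

lemma fundamentalRep_gE : fundamentalRep gE = !![0, 1; 0, 0] := by simp [fundamentalRep]

lemma fundamentalRep_gF : fundamentalRep gF = !![0, 0; 1, 0] := by simp [fundamentalRep]

lemma fundamentalRep_gK : fundamentalRep gK = !![Complex.I, 0; 0, -Complex.I] := by
  simp [fundamentalRep]

lemma fundamentalRep_gKi : fundamentalRep gKi = !![-Complex.I, 0; 0, Complex.I] := by
  simp [fundamentalRep]

lemma fundamentalRep_eq_of_commute_of_anticommute {g : Q} (hK : Commute g gK)
    (hE : g * gE = -(gE * g)) :
    ∃ a : ℂ, fundamentalRep g = !![a, 0; 0, -a] := by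
  replace hK := congrArg fundamentalRep hK.eq
  replace hE := congrArg fundamentalRep hE
  simp only [map_mul, map_neg, fundamentalRep_gE, fundamentalRep_gK] at hK hE
  generalize fundamentalRep g = m at hK hE
  obtain ⟨a, b, c, d, rfl⟩ : ∃ a b c d, m = !![a, b; c, d] := ⟨_, _, _, _, Matrix.eta_fin_two m⟩
  have hb' : -(b * Complex.I) = Complex.I * b := by simpa using congrFun (congrFun hK 0) 1
  have hc : c = 0 := by simpa using congrFun (congrFun hE 0) 0
  have hd : a = -d := by simpa using congrFun (congrFun hE 0) 1
  have hb : b = 0 := by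
    have : 2 * Complex.I * b = 0 := by linear_combination -hb'
    simpa using this
  exact ⟨a, by simp [hb, hc, hd]⟩

/-- The comultiplication of `Q` on generators; these values determine it. -/
structure IsCoproduct (Δ : Q →ₐ[ℂ] TP2 ℂ Q) : Prop where
  map_gE : Δ gE = 1 ⊗ₜ[ℂ] gE + gE ⊗ₜ[ℂ] gK
  map_gF : Δ gF = gKi ⊗ₜ[ℂ] gF + gF ⊗ₜ[ℂ] 1
  map_gK : Δ gK = gK ⊗ₜ[ℂ] gK

/-- The invariant vector in the tensor square of `fundamentalRep`: the q-deformed symplectic form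
at `q = i`, in the matrix encoding of `tensorSquareAction`. -/
def quantumForm : Matrix (Fin 2) (Fin 2) ℂ := !![0, -Complex.I; 1, 0]

namespace IsCoproduct

variable {Δ : Q →ₐ[ℂ] TP2 ℂ Q}

lemma convChar_signCharacter (hΔ : IsCoproduct Δ) (s t : ℤˣ) :
    convChar Δ (signCharacter s) (signCharacter t) = signCharacter (s * t) := by
  apply algHom_ext <;> simp [convChar_apply, hΔ.map_gE, hΔ.map_gF, hΔ.map_gK]

lemma tensorSquareAction_quantumForm (hΔ : IsCoproduct Δ) (a : Q) :
    tensorSquareAction fundamentalRep (Δ a) quantumForm = signCharacter 1 a • quantumForm := by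
  suffices h : Algebra.adjoin ℂ {gE, gF, gK} ≤
      characterSubalgebra ((tensorSquareAction fundamentalRep).comp Δ) (signCharacter 1)
        quantumForm from
    h (adjoin_gE_gF_gK ▸ Algebra.mem_top)
  rw [Algebra.adjoin_le_iff]
  rintro _ (rfl | rfl | rfl) <;>
    simp [characterSubalgebra, quantumForm, transpose_fin_two_of, hΔ.map_gE, hΔ.map_gF, hΔ.map_gK,
      fundamentalRep_gE, fundamentalRep_gF, fundamentalRep_gK, fundamentalRep_gKi]

lemma sq_ne_one_of_groupLike (hΔ : IsCoproduct Δ) {g : Q} (hg : Δ g = g ⊗ₜ[ℂ] g)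
    (hK : Commute g gK) (hE : g * gE = -(gE * g)) : g * g ≠ 1 := by
  intro hsq
  obtain ⟨a, ha⟩ := fundamentalRep_eq_of_commute_of_anticommute hK hE
  have hε : signCharacter 1 g = 1 :=
    apply_eq_one_of_groupLike (by simp [hΔ.convChar_signCharacter]) hg ⟨⟨g, g, hsq, hsq⟩, rfl⟩
  have hdet : -(a * a) = 1 := by
    have h := hΔ.tensorSquareAction_quantumForm g
    rw [hg, tensorSquareAction_tmul, ha, hε, one_smul, quantumForm] at h
    simpa [transpose_fin_two_of] using congrFun (congrFun h 1) 0
  have hsq_a : a * a = 1 := by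
    have h := congrArg fundamentalRep hsq
    rw [map_mul, map_one, ha] at h
    simpa using congrFun (congrFun h 0) 0
  have : (1 : ℂ) = -1 := by linear_combination -hdet - hsq_a
  norm_num at this

end IsCoproduct

end Q

/-- `Q = \bar U_i sl(2)` admits no universal R-matrix. -/
theorem statement3 (Δ : Q →ₐ[ℂ] TP2 ℂ Q)
    (hΔE : Δ gE = (1:Q) ⊗ₜ[ℂ] gE + gE ⊗ₜ[ℂ] gK)
    (hΔF : Δ gF = gKi ⊗ₜ[ℂ] gF + gF ⊗ₜ[ℂ] (1:Q))
    (hΔK : Δ gK = gK ⊗ₜ[ℂ] gK) :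
    ¬ ∃ R : TP2 ℂ Q, IsUnit R ∧
      (∀ a : Q, R * Δ a = flipA ℂ Q (Δ a) * R) ∧
      copL Δ R = emb13 ℂ Q R * emb23 ℂ Q R ∧
      copR Δ R = emb13 ℂ Q R * emb12 ℂ Q R := by
  rintro ⟨R, hu, hint, hL, hR⟩
  have hΔ : Q.IsCoproduct Δ := ⟨hΔE, hΔF, hΔK⟩
  have hε : sliceLeft (Q.signCharacter 1) R = 1 :=
    sliceLeft_eq_one_of_convChar_self hu hL (by simp [hΔ.convChar_signCharacter])
  have hsq : sliceLeft (Q.signCharacter (-1)) R * sliceLeft (Q.signCharacter (-1)) R = 1 := by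
    rw [← sliceLeft_convChar_of_copL_eq hL, hΔ.convChar_signCharacter, neg_one_mul, neg_neg, hε]
  have hK : Commute (sliceLeft (Q.signCharacter (-1)) R) gK :=
    commute_sliceLeft_of_groupLike hΔK (by simp) (hint gK)
  have hE : sliceLeft (Q.signCharacter (-1)) R * gE =
      -(gE * sliceLeft (Q.signCharacter (-1)) R) :=
    sliceLeft_mul_eq_neg_of_skewPrimitive hΔE (by simp) (by simp) (hint gE)
  exact hΔ.sq_ne_one_of_groupLike (map_sliceLeft_of_copR_eq hR _) hK hE hsq
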